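/- arXiv:1104.5690 — 2 statements merged into one kernel-verified Lean document; each statement's English description precedes it below -/
import Mathlib

section
/- Every braid x ∈ B_n is ε-twisted conjugated to some positive, palindromic-free braid: for every x ∈ B_n there exists c ∈ B_n such that rev(c)·x·c lies in P and is palindromic-free. -/
/-!
The proof has two halves.

*Positivity.* Put `δ = σ_0 σ_1 ⋯ σ_{m-1}` with `m = n - 1`. The shift relations
`δ σ_i = σ_{i+1} δ` (`coxeter_shift`) and `δ² σ_{m-1} = σ_0 δ²` (`coxeter_sq_wrap`) show that
`z = δ ^ (m + 1)` is central, and each `σ_i` divides `z` on the left with positive quotient.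
Hence every braid `x` becomes positive after multiplication by a power `p = z ^ k`
(`exists_mul_mem_P`). Reversal preserves positive braids, so `rev p * (x * p)` is positive.

*Descent.* If `y = rev c * x * c` is positive and not palindromic-free, say `σ_i⁻¹ y σ_i⁻¹` is
positive, then `c * σ_i⁻¹` is again an admissible twisting element, and the exponent sum, which is
nonnegative on positive braids, drops by `2`. So the descent stops.
-/

def braidRels (m : ℕ) : Set (FreeGroup (Fin m)) :=
  { r | (∃ i j : Fin m, (i : ℕ) + 1 < (j : ℕ) ∧
          r = FreeGroup.of i * FreeGroup.of j * (FreeGroup.of i)⁻¹ * (FreeGroup.of j)⁻¹) ∨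
        (∃ i j : Fin m, (i : ℕ) + 1 = (j : ℕ) ∧
          r = FreeGroup.of i * FreeGroup.of j * FreeGroup.of i *
              (FreeGroup.of j)⁻¹ * (FreeGroup.of i)⁻¹ * (FreeGroup.of j)⁻¹) }

/-- The braid group on `n` strands. -/
abbrev B (n : ℕ) := PresentedGroup (braidRels (n - 1))

/-- The Artin generators. -/
def σ {n : ℕ} (i : Fin (n - 1)) : B n := PresentedGroup.of i

/-- Evaluation of a signed word in the generators. -/
def π {n : ℕ} (w : List (Fin (n - 1) × Bool)) : B n :=
  (w.map (fun p => if p.2 then σ p.1 else (σ p.1)⁻¹)).prod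

/-- The submonoid of positive braids. -/
def P (n : ℕ) : Submonoid (B n) := Submonoid.closure (Set.range (σ (n := n)))

def σ' {n : ℕ} (j : ℕ) : B n := if h : j < n - 1 then σ ⟨j, h⟩ else 1

/-- The Garside half-twist element Δ. -/
def Δ (n : ℕ) : B n :=
  ((List.range (n - 1)).map
    (fun k => (((List.range (k + 1)).reverse).map (σ' (n := n))).prod)).prod

/-- Simple elements: positive prefixes of Δ. -/
def Simple {n : ℕ} (s : B n) : Prop := s ∈ P n ∧ s⁻¹ * Δ n ∈ P n

/-- Palindromic-free positive braids. -/
def PalFree {n : ℕ} (x : B n) : Prop :=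
  ∀ i : Fin (n - 1), (σ i)⁻¹ * x * (σ i)⁻¹ ∉ P n

/-- Canonical length at most `m`. -/
def lenLE {n : ℕ} (x : B n) (m : ℕ) : Prop :=
  ∃ p : ℤ, (Δ n) ^ (-p) * x ∈ P n ∧ x⁻¹ * (Δ n) ^ (p + (m : ℤ)) ∈ P n

/-- Canonical length exactly `m`. -/
def lenEQ {n : ℕ} (x : B n) (m : ℕ) : Prop :=
  lenLE x m ∧ (1 ≤ m → ¬ lenLE x (m - 1))

/-- Left normal form (as a list of simple factors). -/
def IsLeftNF {n : ℕ} (x : B n) (L : List (B n)) : Prop :=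
  (∀ s ∈ L, Simple s ∧ s ≠ 1) ∧ L.prod = x ∧
  ∀ i : ℕ, i + 1 < L.length → ∀ u : B n, Simple u →
    u⁻¹ * (L.getD i 1 * L.getD (i + 1) 1) ∈ P n → u⁻¹ * L.getD i 1 ∈ P n

/-- Right normal form (as a list of simple factors). -/
def IsRightNF {n : ℕ} (x : B n) (L : List (B n)) : Prop :=
  (∀ s ∈ L, Simple s ∧ s ≠ 1) ∧ L.prod = x ∧
  ∀ i : ℕ, i + 1 < L.length → ∀ u : B n, Simple u →
    (L.getD i 1 * L.getD (i + 1) 1) * u⁻¹ ∈ P n → L.getD (i + 1) 1 * u⁻¹ ∈ P n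

/-! ### The Coxeter element and its powers -/

/-- The product `s 0 * s 1 * ⋯ * s (k - 1)`. -/
def coxeter {G : Type*} [Group G] (s : ℕ → G) : ℕ → G
  | 0 => 1
  | k + 1 => coxeter s k * s k

section Coxeter

variable {G : Type*} [Group G] (s : ℕ → G) (m : ℕ)

theorem coxeter_commute_of_far
    (hcomm : ∀ i j, i + 1 < j → j < m → s i * s j = s j * s i) (j : ℕ) (hj : j < m) :
    ∀ k, k < j → coxeter s k * s j = s j * coxeter s k := by
  intro k
  induction k with
  | zero => intro _; simp [coxeter]
  | succ k ih =>
    intro hk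
    rw [coxeter, mul_assoc, hcomm k j (by omega) hj, ← mul_assoc, ih (by omega), mul_assoc]

theorem coxeter_shift
    (hcomm : ∀ i j, i + 1 < j → j < m → s i * s j = s j * s i)
    (hbraid : ∀ i, i + 1 < m → s i * s (i + 1) * s i = s (i + 1) * s i * s (i + 1))
    (i : ℕ) : ∀ k, i + 1 < k → k ≤ m → coxeter s k * s i = s (i + 1) * coxeter s k := by
  intro k
  induction k with
  | zero => intro h; omega
  | succ k ih =>
    intro hk hm
    rcases Nat.lt_or_ge (i + 1) k with h | h
    · rw [coxeter, mul_assoc, ← hcomm i k h (by omega), ← mul_assoc, ih h (by omega), mul_assoc]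
    · obtain rfl : k = i + 1 := by omega
      calc coxeter s i * s i * s (i + 1) * s i
          = coxeter s i * (s i * s (i + 1) * s i) := by group
        _ = coxeter s i * s (i + 1) * (s i * s (i + 1)) := by
            rw [hbraid i (by omega)]; group
        _ = s (i + 1) * (coxeter s i * s i * s (i + 1)) := by
            rw [coxeter_commute_of_far s m hcomm (i + 1) (by omega) i (by omega)]; group

theorem coxeter_mul_coxeter
    (hcomm : ∀ i j, i + 1 < j → j < m → s i * s j = s j * s i)
    (hbraid : ∀ i, i + 1 < m → s i * s (i + 1) * s i = s (i + 1) * s i * s (i + 1)) :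
    ∀ k, k + 1 ≤ m → s 0 * (coxeter s m * coxeter s k) = coxeter s (k + 1) * coxeter s m := by
  intro k
  induction k with
  | zero => intro _; simp [coxeter]
  | succ k ih =>
    intro hk
    rw [coxeter, ← mul_assoc (coxeter s m), ← mul_assoc (s 0), ih (by omega), mul_assoc,
      coxeter_shift s m hcomm hbraid k m (by omega) le_rfl, ← mul_assoc]
    rfl

/-- Although conjugation by `δ` takes the last generator outside the generating set, conjugation
by `δ²` takes it to the first one. -/
theorem coxeter_sq_wrap (hcomm : ∀ i j, i + 1 < j → j < m + 1 → s i * s j = s j * s i)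
    (hbraid : ∀ i, i + 1 < m + 1 → s i * s (i + 1) * s i = s (i + 1) * s i * s (i + 1)) :
    coxeter s (m + 1) * coxeter s (m + 1) * s m
      = s 0 * (coxeter s (m + 1) * coxeter s (m + 1)) := by
  have h := coxeter_mul_coxeter s (m + 1) hcomm hbraid m le_rfl
  calc coxeter s (m + 1) * coxeter s (m + 1) * s m
      = s 0 * (coxeter s (m + 1) * coxeter s m) * s m := by rw [h]
    _ = s 0 * (coxeter s (m + 1) * (coxeter s m * s m)) := by simp only [mul_assoc]

theorem coxeter_pow_mul
    (hcomm : ∀ i j, i + 1 < j → j < m → s i * s j = s j * s i)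
    (hbraid : ∀ i, i + 1 < m → s i * s (i + 1) * s i = s (i + 1) * s i * s (i + 1)) :
    ∀ j, j < m → coxeter s m ^ j * s 0 = s j * coxeter s m ^ j := by
  intro j
  induction j with
  | zero => intro _; simp
  | succ j ih =>
    intro hj
    rw [pow_succ', mul_assoc, ih (by omega), ← mul_assoc,
      coxeter_shift s m hcomm hbraid j m hj le_rfl, mul_assoc]

theorem coxeter_pow_commute
    (hcomm : ∀ i j, i + 1 < j → j < m → s i * s j = s j * s i)
    (hbraid : ∀ i, i + 1 < m → s i * s (i + 1) * s i = s (i + 1) * s i * s (i + 1))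
    (j : ℕ) (hj : j < m) : Commute (coxeter s m ^ (m + 1)) (s j) := by
  obtain ⟨k, rfl⟩ : ∃ k, m = k + 1 := ⟨m - 1, by omega⟩
  have h0 : Commute (coxeter s (k + 1) ^ (k + 1 + 1)) (s 0) := by
    have h := coxeter_sq_wrap s k hcomm hbraid
    have h' := coxeter_pow_mul s (k + 1) hcomm hbraid k (by omega)
    rw [← pow_two] at h
    rw [Commute, SemiconjBy, show k + 1 + 1 = 2 + k by omega, pow_add, mul_assoc, h',
      ← mul_assoc, h, mul_assoc]
  have hs : s j = coxeter s (k + 1) ^ j * s 0 * (coxeter s (k + 1) ^ j)⁻¹ := by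
    rw [coxeter_pow_mul s (k + 1) hcomm hbraid j hj]; group
  rw [hs]
  have hp : Commute (coxeter s (k + 1) ^ (k + 1 + 1)) (coxeter s (k + 1) ^ j) :=
    (Commute.refl _).pow_pow _ _
  exact (hp.mul_right h0).mul_right hp.inv_right

theorem coxeter_mem (M : Submonoid G) (hs : ∀ j, j < m → s j ∈ M) :
    ∀ k, k ≤ m → coxeter s k ∈ M := by
  intro k
  induction k with
  | zero => intro _; exact M.one_mem
  | succ k ih => intro hk; exact M.mul_mem (ih (by omega)) (hs k (by omega))

theorem inv_mul_coxeter_mem (M : Submonoid G) (hs : ∀ j, j < m → s j ∈ M) :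
    ∀ k, k + 1 ≤ m → (s 0)⁻¹ * coxeter s (k + 1) ∈ M := by
  intro k
  induction k with
  | zero => intro _; simp [coxeter]
  | succ k ih =>
    intro hk
    rw [coxeter, ← mul_assoc]
    exact M.mul_mem (ih (by omega)) (hs _ (by omega))

theorem inv_mul_coxeter_pow_mem (M : Submonoid G)
    (hcomm : ∀ i j, i + 1 < j → j < m → s i * s j = s j * s i)
    (hbraid : ∀ i, i + 1 < m → s i * s (i + 1) * s i = s (i + 1) * s i * s (i + 1))
    (hs : ∀ j, j < m → s j ∈ M) (j : ℕ) (hj : j < m) :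
    (s j)⁻¹ * coxeter s m ^ (m + 1) ∈ M := by
  obtain ⟨k, rfl⟩ : ∃ k, m = k + 1 := ⟨m - 1, by omega⟩
  have hδ := coxeter_mem s (k + 1) M hs (k + 1) le_rfl
  -- `σ_j⁻¹ δ^(m+1) = δ^j (σ_0⁻¹ δ) δ^(m-j)`, since `σ_j = δ^j σ_0 δ^(-j)`.
  have key : (s j)⁻¹ * coxeter s (k + 1) ^ (k + 1 + 1)
      = coxeter s (k + 1) ^ j * ((s 0)⁻¹ * coxeter s (k + 1)) * coxeter s (k + 1) ^ (k + 1 - j) := by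
    have h := coxeter_pow_mul s (k + 1) hcomm hbraid j hj
    rw [inv_mul_eq_iff_eq_mul]
    simp only [← mul_assoc]
    rw [← h, show k + 1 + 1 = j + 1 + (k + 1 - j) by omega, pow_add, pow_succ]
    simp [mul_assoc]
  rw [key]
  exact M.mul_mem (M.mul_mem (M.pow_mem hδ _) (inv_mul_coxeter_mem s (k + 1) M hs k le_rfl))
    (M.pow_mem hδ _)

end Coxeter

/-! ### Making a braid positive -/

theorem σ'_eq {n : ℕ} {j : ℕ} (h : j < n - 1) : σ' (n := n) j = σ ⟨j, h⟩ := dif_pos h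

theorem σ_comm {n : ℕ} (i j : Fin (n - 1)) (h : (i : ℕ) + 1 < j) :
    σ (n := n) i * σ j = σ j * σ i := by
  have h1 : PresentedGroup.mk (braidRels (n - 1)) (FreeGroup.of i * FreeGroup.of j *
      (FreeGroup.of i)⁻¹ * (FreeGroup.of j)⁻¹) = 1 :=
    PresentedGroup.one_of_mem (Or.inl ⟨i, j, h, rfl⟩)
  simp only [map_mul, map_inv] at h1
  change σ (n := n) i * σ j * (σ i)⁻¹ * (σ j)⁻¹ = 1 at h1
  rw [mul_inv_eq_one, mul_inv_eq_iff_eq_mul] at h1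
  exact h1

theorem σ_braid {n : ℕ} (i j : Fin (n - 1)) (h : (i : ℕ) + 1 = j) :
    σ (n := n) i * σ j * σ i = σ j * σ i * σ j := by
  have h1 : PresentedGroup.mk (braidRels (n - 1)) (FreeGroup.of i * FreeGroup.of j *
      FreeGroup.of i * (FreeGroup.of j)⁻¹ * (FreeGroup.of i)⁻¹ * (FreeGroup.of j)⁻¹) = 1 :=
    PresentedGroup.one_of_mem (Or.inr ⟨i, j, h, rfl⟩)
  simp only [map_mul, map_inv] at h1
  change σ (n := n) i * σ j * σ i * (σ j)⁻¹ * (σ i)⁻¹ * (σ j)⁻¹ = 1 at h1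
  rw [mul_inv_eq_one, mul_inv_eq_iff_eq_mul, mul_inv_eq_iff_eq_mul] at h1
  exact h1

theorem σ_mem_P {n : ℕ} (i : Fin (n - 1)) : σ i ∈ P n :=
  Submonoid.subset_closure ⟨i, rfl⟩

/-- The full twist: a positive element commuting with all generators and left-divisible by each. -/
theorem exists_central_positive (n : ℕ) :
    ∃ z ∈ P n, ∀ i : Fin (n - 1), Commute z (σ i) ∧ (σ i)⁻¹ * z ∈ P n := by
  have hcomm : ∀ i j, i + 1 < j → j < n - 1 →
      σ' (n := n) i * σ' j = σ' j * σ' i := by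
    intro i j h hj
    rw [σ'_eq hj, σ'_eq (show i < n - 1 by omega)]
    exact σ_comm _ _ h
  have hbraid : ∀ i, i + 1 < n - 1 →
      σ' (n := n) i * σ' (i + 1) * σ' i = σ' (i + 1) * σ' i * σ' (i + 1) := by
    intro i hi
    rw [σ'_eq hi, σ'_eq (show i < n - 1 by omega)]
    exact σ_braid _ _ rfl
  have hs : ∀ j, j < n - 1 → σ' (n := n) j ∈ P n := by
    intro j hj
    rw [σ'_eq hj]
    exact σ_mem_P _
  refine ⟨coxeter σ' (n - 1) ^ (n - 1 + 1),
    (P n).pow_mem (coxeter_mem _ _ _ hs _ le_rfl) _, fun i => ⟨?_, ?_⟩⟩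
  · have := coxeter_pow_commute σ' (n - 1) hcomm hbraid i i.2
    rwa [σ'_eq i.2] at this
  · have := inv_mul_coxeter_pow_mem σ' (n - 1) (P n) hcomm hbraid hs i i.2
    rwa [σ'_eq i.2] at this

theorem closure_range_σ (n : ℕ) : Subgroup.closure (Set.range (σ (n := n))) = ⊤ :=
  PresentedGroup.closure_range_of _

theorem exists_mul_mem_P {n : ℕ} (x : B n) : ∃ p ∈ P n, x * p ∈ P n := by
  obtain ⟨z, hz, hz'⟩ := exists_central_positive n
  have hx : x ∈ Subgroup.closure (Set.range (σ (n := n))) := by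
    rw [closure_range_σ]; trivial
  suffices h : ∃ k : ℕ, x * z ^ k ∈ P n by
    obtain ⟨k, hk⟩ := h
    exact ⟨z ^ k, (P n).pow_mem hz k, hk⟩
  induction hx using Subgroup.closure_induction_left with
  | one => exact ⟨0, by simp⟩
  | mul_left g hg y _ ih =>
    obtain ⟨i, rfl⟩ := hg
    obtain ⟨k, hk⟩ := ih
    exact ⟨k, by rw [mul_assoc]; exact (P n).mul_mem (σ_mem_P i) hk⟩
  | inv_mul_cancel g hg y hy ih =>
    obtain ⟨i, rfl⟩ := hg
    obtain ⟨k, hk⟩ := ih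
    refine ⟨k + 1, ?_⟩
    have hc : Commute z (y * z ^ k) := by
      refine Commute.mul_right ?_ ((Commute.refl z).pow_right k)
      refine Subgroup.closure_induction (p := fun w _ => Commute z w) ?_
        (Commute.one_right z) (fun _ _ _ _ => Commute.mul_right)
        (fun _ _ => Commute.inv_right) hy
      rintro _ ⟨j, rfl⟩
      exact (hz' j).1
    have : (σ i)⁻¹ * y * z ^ (k + 1) = (σ i)⁻¹ * z * (y * z ^ k) := by
      rw [mul_assoc _ z, hc.eq, pow_succ]; simp only [mul_assoc]
    rw [this]
    exact (P n).mul_mem (hz' i).2 hk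

/-! ### Exponent sum -/

/-- The exponent sum homomorphism, sending each generator to `1 ∈ ℤ`. -/
def expSum (n : ℕ) : B n →* Multiplicative ℤ :=
  PresentedGroup.toGroup (f := fun _ => Multiplicative.ofAdd (1 : ℤ)) (by
    rintro r (⟨i, j, _, rfl⟩ | ⟨i, j, _, rfl⟩) <;> simp)

theorem expSum_σ {n : ℕ} (i : Fin (n - 1)) : expSum n (σ i) = Multiplicative.ofAdd (1 : ℤ) :=
  PresentedGroup.toGroup.of _

theorem expSum_nonneg {n : ℕ} {y : B n} (hy : y ∈ P n) : 0 ≤ (expSum n y).toAdd := by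
  induction hy using Submonoid.closure_induction with
  | mem g hg => obtain ⟨i, rfl⟩ := hg; simp [expSum_σ]
  | one => simp
  | mul a b _ _ ha hb => simp only [map_mul, toAdd_mul]; omega

/-- every braid is ε-twisted conjugated to a positive
palindromic-free braid. -/
theorem twisted_conjugate_to_positive_palindromic_free (n : ℕ)
    (rev : B n → B n)
    (hrev_mul : ∀ x y : B n, rev (x * y) = rev y * rev x)
    (hrev_gen : ∀ i : Fin (n - 1), rev (σ i) = σ i)
    (x : B n) :
    ∃ c : B n, rev c * x * c ∈ P n ∧ PalFree (rev c * x * c) := by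
  have hone : rev 1 = 1 := by
    have h := hrev_mul 1 1
    rw [mul_one] at h
    exact left_eq_mul.mp h
  have hinv : ∀ i : Fin (n - 1), rev (σ i)⁻¹ = (σ i)⁻¹ := by
    intro i
    have h := hrev_mul (σ i) (σ i)⁻¹
    rw [mul_inv_cancel, hone, hrev_gen] at h
    exact eq_inv_of_mul_eq_one_left h.symm
  have hP : ∀ p ∈ P n, rev p ∈ P n := by
    intro p hp
    induction hp using Submonoid.closure_induction with
    | mem g hg => obtain ⟨i, rfl⟩ := hg; rw [hrev_gen]; exact σ_mem_P i
    | one => rw [hone]; exact (P n).one_mem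
    | mul a b _ _ ha hb => rw [hrev_mul]; exact (P n).mul_mem hb ha
  have descent : ∀ N : ℕ, ∀ c : B n, rev c * x * c ∈ P n →
      (expSum n (rev c * x * c)).toAdd ≤ N →
      ∃ c : B n, rev c * x * c ∈ P n ∧ PalFree (rev c * x * c) := by
    intro N
    induction N using Nat.strong_induction_on with
    | _ N ih =>
      intro c hc hN
      by_cases hpf : PalFree (rev c * x * c)
      · exact ⟨c, hc, hpf⟩
      · simp only [PalFree, not_forall, not_not] at hpf
        obtain ⟨i, hi⟩ := hpf
        have heq : rev (c * (σ i)⁻¹) * x * (c * (σ i)⁻¹)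
            = (σ i)⁻¹ * (rev c * x * c) * (σ i)⁻¹ := by
          rw [hrev_mul, hinv]; simp only [mul_assoc]
        have hlen : (expSum n ((σ i)⁻¹ * (rev c * x * c) * (σ i)⁻¹)).toAdd
            = (expSum n (rev c * x * c)).toAdd - 2 := by
          generalize rev c * x * c = y
          simp only [map_mul, map_inv, expSum_σ, toAdd_mul, toAdd_inv, toAdd_ofAdd]
          omega
        have hnn := expSum_nonneg hi
        refine ih (N - 2) (by omega) (c * (σ i)⁻¹) (by rwa [heq]) ?_
        rw [heq]
        omega
  obtain ⟨p, hp, hxp⟩ := exists_mul_mem_P x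
  have hpos : rev p * x * p ∈ P n := by
    rw [mul_assoc]; exact (P n).mul_mem (hP p hp) hxp
  exact descent _ p hpos (Int.self_le_toNat _)
end

section
/- Let x ∈ P be a positive braid with sup(x) = r + k, where r ≥ k ≥ 1. If ℓ(ε(x)·x) ≤ 2r + 1, then there exist positive braids a, b ∈ P such that x = rev(a)·b·a and sup(b) ≤ r. -/
/-! ### The positive braid monoid -/

namespace BraidMonoid

/-- Two generators are adjacent when their indices differ by one. -/
def Adj {m : ℕ} (i j : Fin m) : Prop := (i : ℕ) + 1 = j ∨ (j : ℕ) + 1 = i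

/-- Two generators are far when their indices differ by at least two. -/
def Far {m : ℕ} (i j : Fin m) : Prop := (i : ℕ) + 1 < j ∨ (j : ℕ) + 1 < i

/-- The braid relations, as relations between positive words. -/
inductive Rels (m : ℕ) : FreeMonoid (Fin m) → FreeMonoid (Fin m) → Prop
  | far (i j : Fin m) (h : Far i j) :
      Rels m (FreeMonoid.of i * FreeMonoid.of j) (FreeMonoid.of j * FreeMonoid.of i)
  | adj (i j : Fin m) (h : Adj i j) :
      Rels m (FreeMonoid.of i * (FreeMonoid.of j * FreeMonoid.of i))
        (FreeMonoid.of j * (FreeMonoid.of i * FreeMonoid.of j))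

/-- The monoid of positive braids on `m + 1` strands, presented by the braid relations. -/
abbrev BM (m : ℕ) := PresentedMonoid (Rels m)

/-- The generators of the positive braid monoid. -/
def gen {m : ℕ} (i : Fin m) : BM m := PresentedMonoid.of _ i

variable {m : ℕ}

lemma Adj.symm {i j : Fin m} (h : Adj i j) : Adj j i := Or.symm h

lemma Far.symm {i j : Fin m} (h : Far i j) : Far j i := Or.symm h

lemma eq_or_adj_or_far (i j : Fin m) : i = j ∨ Adj i j ∨ Far i j := by
  unfold Adj Far
  rw [Fin.ext_iff]
  omega

lemma gen_far {i j : Fin m} (h : Far i j) : gen i * gen j = gen j * gen i :=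
  PresentedMonoid.mk_eq_mk_of_rel (Rels.far i j h)

lemma gen_adj {i j : Fin m} (h : Adj i j) :
    gen i * (gen j * gen i) = gen j * (gen i * gen j) :=
  PresentedMonoid.mk_eq_mk_of_rel (Rels.adj i j h)

lemma gen_far' {i j : Fin m} (h : Far i j) (z : BM m) :
    gen i * (gen j * z) = gen j * (gen i * z) := by
  rw [← mul_assoc, gen_far h, mul_assoc]

lemma gen_adj' {i j : Fin m} (h : Adj i j) (z : BM m) :
    gen i * (gen j * (gen i * z)) = gen j * (gen i * (gen j * z)) := by
  have := congrArg (· * z) (gen_adj h)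
  simpa only [mul_assoc] using this

/-- Word length, well defined on the monoid because the braid relations are homogeneous. -/
def lenHom (m : ℕ) : BM m →* Multiplicative ℕ :=
  PresentedMonoid.lift (fun _ => Multiplicative.ofAdd 1) (by
    intro a b h
    cases h <;> simp)

/-- The length of a positive braid, as a natural number. -/
def len (x : BM m) : ℕ := Multiplicative.toAdd (lenHom m x)

@[simp] lemma len_mul (x y : BM m) : len (x * y) = len x + len y := by
  simp [len]

@[simp] lemma len_gen (i : Fin m) : len (gen i) = 1 := rfl

lemma mk_of_mul (i : Fin m) (X : FreeMonoid (Fin m)) :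
    PresentedMonoid.mk (Rels m) (FreeMonoid.of i * X) = gen i * PresentedMonoid.mk _ X :=
  map_mul _ _ _

lemma word_cases (U : FreeMonoid (Fin m)) : U = 1 ∨ ∃ i X, U = FreeMonoid.of i * X := by
  induction U using FreeMonoid.casesOn with
  | one => exact Or.inl rfl
  | of_mul i X => exact Or.inr ⟨i, X, rfl⟩

lemma word_inj {i j : Fin m} {X Y : FreeMonoid (Fin m)}
    (h : FreeMonoid.of i * X = FreeMonoid.of j * Y) : i = j ∧ X = Y := by
  have h' : (i :: FreeMonoid.toList X) = (j :: FreeMonoid.toList Y) := h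
  exact List.cons.inj h'

lemma word_ne_one {i : Fin m} {X : FreeMonoid (Fin m)} : FreeMonoid.of i * X ≠ 1 := by
  intro h
  have h' : (i :: FreeMonoid.toList X) = [] := h
  cases h'

@[elab_as_elim]
lemma gen_induction {C : BM m → Prop} (one : C 1) (mul : ∀ i x, C x → C (gen i * x)) (x : BM m) :
    C x := by
  obtain ⟨w, rfl⟩ := PresentedMonoid.surjective_mk x
  induction w using FreeMonoid.recOn with
  | one => exact one
  | of_mul i X h => exact mul i _ h

lemma cases_gen (x : BM m) : x = 1 ∨ ∃ i y, x = gen i * y := by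
  refine gen_induction (Or.inl rfl) (fun i y _ => Or.inr ⟨i, y, rfl⟩) x

/-! ### Garside's lemma on common multiples of two generators -/

/-- `CommonMul i j X Y` says that `gen i * X = gen j * Y` holds for the obvious reason: both sides
are the same right multiple of the least common multiple of `gen i` and `gen j`. -/
def CommonMul (i j : Fin m) (X Y : BM m) : Prop :=
  (i = j ∧ X = Y) ∨
  (Adj i j ∧ ∃ Z, X = gen j * (gen i * Z) ∧ Y = gen i * (gen j * Z)) ∨
  (Far i j ∧ ∃ Z, X = gen j * Z ∧ Y = gen i * Z)

lemma CommonMul.symm {i j : Fin m} {X Y : BM m} (h : CommonMul i j X Y) : CommonMul j i Y X := by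
  rcases h with ⟨rfl, rfl⟩ | ⟨h, Z, hX, hY⟩ | ⟨h, Z, hX, hY⟩
  · exact Or.inl ⟨rfl, rfl⟩
  · exact Or.inr (Or.inl ⟨h.symm, Z, hY, hX⟩)
  · exact Or.inr (Or.inr ⟨h.symm, Z, hY, hX⟩)

lemma not_adj_far {i j : Fin m} (h : Adj i j) (h' : Far i j) : False := by
  unfold Adj at h
  unfold Far at h'
  omega

lemma not_adj_self {i : Fin m} (h : Adj i i) : False := by
  unfold Adj at h
  omega

lemma not_far_self {i : Fin m} (h : Far i i) : False := by
  unfold Far at h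
  omega

lemma CommonMul.eq {i : Fin m} {X Y : BM m} (h : CommonMul i i X Y) : X = Y := by
  rcases h with ⟨_, h⟩ | ⟨h, _⟩ | ⟨h, _⟩
  · exact h
  · exact (not_adj_self h).elim
  · exact (not_far_self h).elim

lemma CommonMul.adj {i j : Fin m} {X Y : BM m} (h : CommonMul i j X Y) (hij : Adj i j) :
    ∃ Z, X = gen j * (gen i * Z) ∧ Y = gen i * (gen j * Z) := by
  rcases h with ⟨rfl, _⟩ | ⟨_, h⟩ | ⟨h, _⟩
  · exact (not_adj_self hij).elim
  · exact h
  · exact (not_adj_far hij h).elim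

lemma CommonMul.far {i j : Fin m} {X Y : BM m} (h : CommonMul i j X Y) (hij : Far i j) :
    ∃ Z, X = gen j * Z ∧ Y = gen i * Z := by
  rcases h with ⟨rfl, _⟩ | ⟨h, _⟩ | ⟨_, h⟩
  · exact (not_far_self hij).elim
  · exact (not_adj_far h hij).elim
  · exact h

/-- The cube condition: if Garside's lemma holds for products shorter than `W`, then `CommonMul`
composes along `W`. The case distinction is on the positions of `i`, `j`, `k` in the Dynkin
diagram; three pairwise adjacent indices do not occur. -/
lemma CommonMul.trans {i k j : Fin m} {X W Y : BM m}
    (IH : ∀ (i j : Fin m) (X Y : BM m), len X < len W → gen i * X = gen j * Y → CommonMul i j X Y)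
    (h₁ : CommonMul i k X W) (h₂ : CommonMul k j W Y) : CommonMul i j X Y := by
  rcases h₁ with ⟨rfl, rfl⟩ | ⟨hik, Z₁, rfl, hW₁⟩ | ⟨hik, Z₁, rfl, hW₁⟩
  · exact h₂
  · rcases h₂ with ⟨rfl, rfl⟩ | ⟨hkj, Z₂, hW₂, rfl⟩ | ⟨hkj, Z₂, hW₂, rfl⟩
    · exact Or.inr (Or.inl ⟨hik, Z₁, rfl, hW₁⟩)
    · -- `k` is adjacent to both `i` and `j`
      have e := hW₁.symm.trans hW₂
      have c := IH _ _ _ _ (by rw [hW₁]; simp) e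
      rcases eq_or_adj_or_far i j with rfl | hij | hij
      · have c' := (IH _ _ _ _ (by rw [hW₁]; simp; omega) c.eq).eq
        exact Or.inl ⟨rfl, by rw [c']⟩
      · exfalso
        unfold Adj at *
        omega
      · obtain ⟨Z', e₁, e₂⟩ := c.far hij
        obtain ⟨A, rfl, hA⟩ := (IH _ _ _ _ (by rw [hW₁]; simp; omega) e₁).adj hkj
        obtain ⟨C, rfl, hC⟩ := (IH _ _ _ _ (by rw [hW₂]; simp; omega) e₂).adj hik.symm
        have e₃ := (IH _ _ _ _ (by rw [hW₁]; simp; omega) (hA.symm.trans hC)).eq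
        obtain ⟨E, rfl, rfl⟩ := (IH _ _ _ _ (by rw [hW₁]; simp; omega) e₃).far hij.symm
        refine Or.inr (Or.inr ⟨hij, gen k * (gen j * (gen i * (gen k * E))), ?_, ?_⟩)
        · rw [gen_far' hij, gen_adj' hik, gen_adj' hkj]
        · rw [← gen_far' hij (gen k * (gen j * E)), ← gen_adj' hkj, gen_adj' hik.symm,
            gen_far' hij]
    · -- `k` is adjacent to `i` and far from `j`
      have e := hW₁.symm.trans hW₂
      have c := IH _ _ _ _ (by rw [hW₁]; simp) e
      rcases eq_or_adj_or_far i j with rfl | hij | hij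
      · exact (not_adj_far hik hkj.symm).elim
      · obtain ⟨A, e₁, rfl⟩ := c.adj hij
        obtain ⟨C, rfl, e₂⟩ := (IH _ _ _ _ (by rw [hW₁]; simp; omega) e₁).far hkj
        have hl : len W = len C + 3 := by rw [hW₁]; simp; omega
        obtain ⟨E, rfl, rfl⟩ := (IH _ _ _ _ (by
          have := congrArg len e₂; simp at this; omega) e₂).adj hik
        refine Or.inr (Or.inl ⟨hij, gen k * (gen i * (gen j * E)), ?_, ?_⟩)
        · rw [gen_adj' hij, gen_far' hkj, ← gen_far' hkj E, ← gen_adj' hik]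
        · rw [← gen_far' hkj (gen i * E), ← gen_adj' hik, gen_adj' hij, gen_far' hkj]
      · obtain ⟨A, e₁, rfl⟩ := c.far hij
        obtain ⟨C, rfl, rfl⟩ := (IH _ _ _ _ (by rw [hW₁]; simp; omega) e₁).far hkj
        refine Or.inr (Or.inr ⟨hij, gen k * (gen i * C), ?_, ?_⟩)
        · rw [gen_far' hij, gen_far' hkj]
        · rw [gen_adj' hik]
  · rcases h₂ with ⟨rfl, rfl⟩ | ⟨hkj, Z₂, hW₂, rfl⟩ | ⟨hkj, Z₂, hW₂, rfl⟩
    · exact Or.inr (Or.inr ⟨hik, Z₁, rfl, hW₁⟩)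
    · -- `k` is far from `i` and adjacent to `j`
      have e := hW₁.symm.trans hW₂
      have c := IH _ _ _ _ (by rw [hW₁]; simp) e
      rcases eq_or_adj_or_far i j with rfl | hij | hij
      · exact (not_adj_far hkj hik.symm).elim
      · obtain ⟨A, rfl, e₁⟩ := c.adj hij
        obtain ⟨C, rfl, e₂⟩ := (IH _ _ _ _ (by rw [hW₂]; simp; omega) e₁).far hik.symm
        obtain ⟨E, rfl, rfl⟩ := (IH _ _ _ _ (by rw [hW₁]; simp; omega) e₂).adj hkj.symm
        refine Or.inr (Or.inl ⟨hij, gen k * (gen j * (gen i * E)), ?_, ?_⟩)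
        · rw [gen_far' hik, gen_adj' hkj, ← gen_adj' hij, ← gen_far' hik]
        · rw [← gen_adj' hij, ← gen_far' hik, gen_far' hik E, gen_adj' hkj]
      · obtain ⟨A, rfl, e₁⟩ := c.far hij
        obtain ⟨C, rfl, rfl⟩ := (IH _ _ _ _ (by rw [hW₂]; simp; omega) e₁).far hik.symm
        refine Or.inr (Or.inr ⟨hij, gen k * (gen j * C), ?_, ?_⟩)
        · rw [gen_adj' hkj]
        · rw [← gen_far' hij, ← gen_far' hik]
    · -- `k` is far from both `i` and `j`
      have e := hW₁.symm.trans hW₂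
      have c := IH _ _ _ _ (by rw [hW₁]; simp) e
      rcases eq_or_adj_or_far i j with rfl | hij | hij
      · exact Or.inl ⟨rfl, by rw [c.eq]⟩
      · obtain ⟨A, rfl, rfl⟩ := c.adj hij
        refine Or.inr (Or.inl ⟨hij, gen k * A, ?_, ?_⟩)
        · rw [gen_far' hkj, gen_far' hik.symm]
        · rw [gen_far' hik.symm, gen_far' hkj]
      · obtain ⟨A, rfl, rfl⟩ := c.far hij
        refine Or.inr (Or.inr ⟨hij, gen k * A, ?_, ?_⟩)
        · rw [gen_far' hkj]
        · rw [gen_far' hik.symm]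

/-- The relation on words behind Garside's lemma: the words are both empty, or their heads and
tails satisfy `CommonMul`. -/
def HeadRel (U V : FreeMonoid (Fin m)) : Prop :=
  (U = 1 ∧ V = 1) ∨ ∃ i j X Y, U = FreeMonoid.of i * X ∧ V = FreeMonoid.of j * Y ∧
    CommonMul i j (PresentedMonoid.mk (Rels m) X) (PresentedMonoid.mk (Rels m) Y)

/-- `HeadRel` contains the congruence generated by the braid relations, on words of length at most
`N`. -/
lemma headRel_of_rel (N : ℕ) : ∀ U V : FreeMonoid (Fin m), ConGen.Rel (Rels m) U V →
    len (PresentedMonoid.mk (Rels m) U) ≤ N → HeadRel U V := by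
  induction N with
  | zero =>
    intro U V h hl
    have hV : len (PresentedMonoid.mk (Rels m) V) ≤ 0 := by
      rwa [← PresentedMonoid.mk_eq_mk_iff.2 h]
    rcases word_cases U with rfl | ⟨i, X, rfl⟩
    · rcases word_cases V with rfl | ⟨j, Y, rfl⟩
      · exact Or.inl ⟨rfl, rfl⟩
      · rw [mk_of_mul] at hV
        simp at hV
    · rw [mk_of_mul] at hl
      simp at hl
  | succ N IH =>
    have IH' : ∀ (i j : Fin m) (X Y : BM m), len X < N → gen i * X = gen j * Y →
        CommonMul i j X Y := by
      intro i j X Y hl h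
      obtain ⟨X, rfl⟩ := PresentedMonoid.surjective_mk X
      obtain ⟨Y, rfl⟩ := PresentedMonoid.surjective_mk Y
      rw [← mk_of_mul, ← mk_of_mul] at h
      rcases IH _ _ (PresentedMonoid.mk_eq_mk_iff.1 h) (by rw [mk_of_mul]; simp; omega) with
        ⟨h1, _⟩ | ⟨i', j', X', Y', h1, h2, h3⟩
      · exact (word_ne_one h1).elim
      · obtain ⟨rfl, rfl⟩ := word_inj h1
        obtain ⟨rfl, rfl⟩ := word_inj h2
        exact h3
    intro U V h
    induction h with
    | of U V h =>
      intro _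
      cases h with
      | far i j h =>
        exact Or.inr ⟨i, j, _, _, rfl, rfl,
          Or.inr (Or.inr ⟨h, 1, (mul_one _).symm, (mul_one _).symm⟩)⟩
      | adj i j h =>
        exact Or.inr ⟨i, j, _, _, rfl, rfl,
          Or.inr (Or.inl ⟨h, 1, by rw [mk_of_mul, mul_one]; rfl, by rw [mk_of_mul, mul_one]; rfl⟩)⟩
    | refl U =>
      intro _
      rcases word_cases U with rfl | ⟨i, X, rfl⟩
      · exact Or.inl ⟨rfl, rfl⟩
      · exact Or.inr ⟨i, i, X, X, rfl, rfl, Or.inl ⟨rfl, rfl⟩⟩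
    | symm h ih =>
      intro hl
      rw [← PresentedMonoid.mk_eq_mk_iff.2 h] at hl
      rcases ih hl with ⟨h1, h2⟩ | ⟨i, j, X, Y, h1, h2, h3⟩
      · exact Or.inl ⟨h2, h1⟩
      · exact Or.inr ⟨j, i, Y, X, h2, h1, h3.symm⟩
    | trans h h' ih ih' =>
      intro hl
      have hl' := hl
      rw [PresentedMonoid.mk_eq_mk_iff.2 h] at hl'
      rcases ih hl with ⟨rfl, rfl⟩ | ⟨i, k, X, W, rfl, rfl, h3⟩
      · exact ih' hl'
      · rcases ih' hl' with ⟨h1, _⟩ | ⟨k', j, W', Y, h1, rfl, h3'⟩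
        · exact (word_ne_one h1).elim
        · obtain ⟨rfl, rfl⟩ := word_inj h1
          refine Or.inr ⟨i, j, X, Y, rfl, rfl, CommonMul.trans ?_ h3 h3'⟩
          intro i j X Y hX
          refine IH' i j X Y ?_
          rw [mk_of_mul] at hl'
          simp at hl'
          omega
    | @mul U V U' V' h h' ih ih' =>
      intro hl
      rw [map_mul, len_mul] at hl
      rcases ih (by omega) with ⟨rfl, rfl⟩ | ⟨i, j, X, Y, rfl, rfl, h3⟩
      · rw [one_mul, one_mul]
        exact ih' (by omega)
      · refine Or.inr ⟨i, j, X * U', Y * V', mul_assoc _ _ _, mul_assoc _ _ _, ?_⟩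
        rw [map_mul, map_mul, PresentedMonoid.mk_eq_mk_iff.2 h']
        rcases h3 with ⟨rfl, h3⟩ | ⟨h, Z, h3, h4⟩ | ⟨h, Z, h3, h4⟩
        · exact Or.inl ⟨rfl, by rw [h3]⟩
        · exact Or.inr (Or.inl ⟨h, Z * PresentedMonoid.mk _ V', by
            rw [h3]; simp only [mul_assoc], by rw [h4]; simp only [mul_assoc]⟩)
        · exact Or.inr (Or.inr ⟨h, Z * PresentedMonoid.mk _ V', by
            rw [h3]; simp only [mul_assoc], by rw [h4]; simp only [mul_assoc]⟩)

/-- Garside's lemma: every common right multiple of two generators is a right multiple of their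
least common multiple. -/
theorem commonMul_of_eq {i j : Fin m} {X Y : BM m} (h : gen i * X = gen j * Y) :
    CommonMul i j X Y := by
  obtain ⟨X, rfl⟩ := PresentedMonoid.surjective_mk X
  obtain ⟨Y, rfl⟩ := PresentedMonoid.surjective_mk Y
  rw [← mk_of_mul, ← mk_of_mul] at h
  rcases headRel_of_rel _ _ _ (PresentedMonoid.mk_eq_mk_iff.1 h) le_rfl with
    ⟨h1, _⟩ | ⟨i', j', X', Y', h1, h2, h3⟩
  · exact (word_ne_one h1).elim
  · obtain ⟨rfl, rfl⟩ := word_inj h1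
    obtain ⟨rfl, rfl⟩ := word_inj h2
    exact h3

/-! ### Cancellation and least common multiples -/

lemma left_cancel (a : BM m) : ∀ x y : BM m, a * x = a * y → x = y := by
  induction a using gen_induction with
  | one => intro x y h; simpa using h
  | mul i a ih =>
    intro x y h
    rw [mul_assoc, mul_assoc] at h
    exact ih _ _ (commonMul_of_eq h).eq

/-- `IsLcm a b c` says that `c` is a least common right multiple of `a` and `b` with respect to
left divisibility. -/
def IsLcm (a b c : BM m) : Prop := ∀ d, (a ∣ d ∧ b ∣ d) ↔ c ∣ d

/-- Two generators have a least common right multiple `gen i * p = gen j * q`. -/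
lemma exists_comp (i j : Fin m) : ∃ p q : BM m, gen i * p = gen j * q ∧
    ∀ X Y, gen i * X = gen j * Y → ∃ Z, X = p * Z ∧ Y = q * Z := by
  rcases eq_or_adj_or_far i j with rfl | h | h
  · refine ⟨1, 1, rfl, fun X Y e => ⟨X, by simp, ?_⟩⟩
    rw [one_mul, (commonMul_of_eq e).eq]
  · refine ⟨gen j * gen i, gen i * gen j, gen_adj h, fun X Y e => ?_⟩
    simpa only [mul_assoc] using (commonMul_of_eq e).adj h
  · exact ⟨gen j, gen i, gen_far h, fun X Y e => (commonMul_of_eq e).far h⟩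

/-- Two elements with a common right multiple have a least one, by induction on the length of the
common multiple. -/
lemma exists_lcm_aux (N : ℕ) : ∀ a b c : BM m, len c ≤ N → a ∣ c → b ∣ c → ∃ l, IsLcm a b l := by
  induction N with
  | zero =>
    rintro a b c hc ⟨u, rfl⟩ ⟨v, hv⟩
    rcases cases_gen a with rfl | ⟨i, a, rfl⟩
    · exact ⟨b, fun d => ⟨fun h => h.2, fun h => ⟨one_dvd _, h⟩⟩⟩
    · simp at hc
  | succ N IH =>
    rintro a b c hc ⟨u, rfl⟩ ⟨v, hv⟩
    rcases cases_gen a with rfl | ⟨i, a, rfl⟩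
    · exact ⟨b, fun d => ⟨fun h => h.2, fun h => ⟨one_dvd _, h⟩⟩⟩
    rcases cases_gen b with rfl | ⟨j, b, rfl⟩
    · exact ⟨gen i * a, fun d => ⟨fun h => h.1, fun h => ⟨h, one_dvd _⟩⟩⟩
    obtain ⟨p, q, hpq, H⟩ := exists_comp i j
    rw [mul_assoc, mul_assoc] at hv
    obtain ⟨z, h1, h2⟩ := H _ _ hv
    have l1 : len (a * u) ≤ N := by simp at hc ⊢; omega
    have l2 : len (b * v) ≤ N := by
      have := congrArg len hv
      simp at hc this ⊢
      omega
    have l3 : len z ≤ N := by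
      have := congrArg len h1
      simp at l1 this
      omega
    obtain ⟨s, hs⟩ := IH a p (a * u) l1 ⟨u, rfl⟩ ⟨z, h1⟩
    obtain ⟨t, ht⟩ := IH b q (b * v) l2 ⟨v, rfl⟩ ⟨z, h2⟩
    obtain ⟨p', rfl⟩ := ((hs s).2 dvd_rfl).2
    obtain ⟨q', rfl⟩ := ((ht t).2 dvd_rfl).2
    have cancel : ∀ a b c : BM m, a * b ∣ a * c → b ∣ c := by
      rintro a b c ⟨e, he⟩
      exact ⟨e, left_cancel a _ _ (by rw [he, mul_assoc])⟩
    have hp' : ∀ z, a ∣ p * z ↔ p' ∣ z := fun z =>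
      ⟨fun h => cancel _ _ _ ((hs _).1 ⟨h, ⟨z, rfl⟩⟩), fun h => ((hs _).2 (mul_dvd_mul_left p h)).1⟩
    have hq' : ∀ z, b ∣ q * z ↔ q' ∣ z := fun z =>
      ⟨fun h => cancel _ _ _ ((ht _).1 ⟨h, ⟨z, rfl⟩⟩), fun h => ((ht _).2 (mul_dvd_mul_left q h)).1⟩
    obtain ⟨w, hw⟩ := IH p' q' z l3 ((hp' z).1 ⟨u, h1.symm⟩) ((hq' z).1 ⟨v, h2.symm⟩)
    refine ⟨gen i * (p * w), fun d => ⟨?_, ?_⟩⟩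
    · rintro ⟨⟨e, rfl⟩, ⟨f, hf⟩⟩
      rw [mul_assoc, mul_assoc] at hf
      obtain ⟨y, h3, h4⟩ := H _ _ hf
      rw [mul_assoc, h3]
      exact mul_dvd_mul_left _ (mul_dvd_mul_left _
        ((hw y).1 ⟨(hp' y).1 ⟨e, h3.symm⟩, (hq' y).1 ⟨f, h4.symm⟩⟩))
    · rintro ⟨e, rfl⟩
      obtain ⟨h5, h6⟩ := (hw (w * e)).2 ⟨e, rfl⟩
      constructor
      · rw [mul_assoc, mul_assoc]
        exact mul_dvd_mul_left _ ((hp' _).2 h5)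
      · rw [mul_assoc, mul_assoc, ← mul_assoc, hpq, mul_assoc]
        exact mul_dvd_mul_left _ ((hq' _).2 h6)

lemma exists_lcm {a b c : BM m} (ha : a ∣ c) (hb : b ∣ c) : ∃ l, IsLcm a b l :=
  exists_lcm_aux _ a b c le_rfl ha hb

/-! ### Word reversal -/

/-- The anti-automorphism of the positive braid monoid fixing the generators, as a homomorphism to
the opposite monoid. -/
def revHom (m : ℕ) : BM m →* (BM m)ᵐᵒᵖ :=
  PresentedMonoid.lift (fun i => MulOpposite.op (gen i)) (by
    intro a b h
    cases h with
    | far i j h => simp [← MulOpposite.op_mul, gen_far h]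
    | adj i j h => simp [← MulOpposite.op_mul, mul_assoc, gen_adj h])

/-- Reversal of positive braids. -/
def revM (x : BM m) : BM m := MulOpposite.unop (revHom m x)

@[simp] lemma revM_mul (x y : BM m) : revM (x * y) = revM y * revM x := by simp [revM]

@[simp] lemma revM_one : revM (1 : BM m) = 1 := by simp [revM]

@[simp] lemma revM_gen (i : Fin m) : revM (gen i) = gen i := rfl

@[simp] lemma revM_revM (x : BM m) : revM (revM x) = x := by
  induction x using gen_induction with
  | one => simp
  | mul i x ih => simp [ih]

lemma right_cancel (a x y : BM m) (h : x * a = y * a) : x = y := by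
  have := left_cancel (revM a) (revM x) (revM y) (by rw [← revM_mul, h, revM_mul])
  rw [← revM_revM x, this, revM_revM]

/-! ### The Garside element -/

/-- Generators indexed by natural numbers, with value `1` out of range. -/
def s (m : ℕ) (j : ℕ) : BM m := if h : j < m then gen ⟨j, h⟩ else 1

lemma s_of_lt {j : ℕ} (h : j < m) : s m j = gen ⟨j, h⟩ := dif_pos h

lemma s_val (i : Fin m) : s m i = gen i := s_of_lt i.2

lemma s_far {i j : ℕ} (h : i + 1 < j) : s m i * s m j = s m j * s m i := by
  by_cases hj : j < m
  · rw [s_of_lt hj, s_of_lt (by omega : i < m)]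
    exact gen_far (Or.inl h)
  · simp [s, hj]

lemma s_adj {i : ℕ} (h : i + 1 < m) :
    s m i * (s m (i + 1) * s m i) = s m (i + 1) * (s m i * s m (i + 1)) := by
  rw [s_of_lt h, s_of_lt (by omega : i < m)]
  exact gen_adj (Or.inl rfl)

@[simp] lemma revM_s (j : ℕ) : revM (s m j) = s m j := by
  unfold s
  split <;> simp

/-- The descending product `s (k - 1) * ⋯ * s 0`. -/
def c (m : ℕ) : ℕ → BM m
  | 0 => 1
  | k + 1 => s m k * c m k

/-- The half twist on the first `k + 1` strands; `D m m` is the Garside element. -/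
def D (m : ℕ) : ℕ → BM m
  | 0 => 1
  | k + 1 => D m k * c m (k + 1)

lemma s_c_comm {k j : ℕ} (h : k < j) : s m j * c m k = c m k * s m j := by
  induction k with
  | zero => simp [c]
  | succ k ih => rw [c, ← mul_assoc, ← s_far h, mul_assoc, ih (by omega), mul_assoc]

lemma s_D_comm {k j : ℕ} (h : k < j) : s m j * D m k = D m k * s m j := by
  induction k with
  | zero => simp [D]
  | succ k ih => rw [D, ← mul_assoc, ih (by omega), mul_assoc, s_c_comm h, mul_assoc]

lemma s_mul_c {k : ℕ} (hk : k < m) {i : ℕ} (hi : i < k) :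
    s m i * c m (k + 1) = c m (k + 1) * s m (i + 1) := by
  induction k with
  | zero => omega
  | succ k ih =>
    rcases Nat.lt_succ_iff_lt_or_eq.1 hi with h | rfl
    · rw [c, ← mul_assoc, s_far (by omega), mul_assoc, ih (by omega) h, mul_assoc]
    · have := congrArg (· * c m i) (s_adj hk)
      simp only [mul_assoc] at this
      rw [c, c, this, s_c_comm (by omega)]
      simp only [mul_assoc]

lemma D_succ (k : ℕ) : D m (k + 1) = revM (c m (k + 1)) * D m k := by
  induction k with
  | zero => simp [D, c]
  | succ k ih =>
    calc D m (k + 1 + 1) = revM (c m (k + 1)) * (D m k * s m (k + 1)) * c m (k + 1) := by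
          rw [D, ih, c.eq_2 m (k + 1)]
          simp only [mul_assoc]
      _ = revM (c m (k + 1 + 1)) * D m (k + 1) := by
          rw [← s_D_comm (by omega), D, c.eq_2 m (k + 1), revM_mul, revM_s]
          simp only [mul_assoc]

lemma revM_D (k : ℕ) : revM (D m k) = D m k := by
  induction k with
  | zero => simp [D]
  | succ k ih => rw [D_succ, revM_mul, ih, revM_revM, ← D_succ, D]

/-- Conjugation by the half twist flips the indices of the generators. -/
lemma s_mul_D {k : ℕ} (hk : k ≤ m) {i : ℕ} (hi : i < k) :
    s m i * D m k = D m k * s m (k - 1 - i) := by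
  induction k generalizing i with
  | zero => omega
  | succ k ih =>
    have key : ∀ i, i < k → s m i * D m (k + 1) = D m (k + 1) * s m (k - i) := by
      intro i hi
      rw [D, ← mul_assoc, ih (by omega) hi, mul_assoc, s_mul_c (by omega) (by omega), mul_assoc]
      congr 3
      omega
    rcases Nat.lt_succ_iff_lt_or_eq.1 hi with h | rfl
    · exact key i h
    · rcases Nat.eq_zero_or_pos i with rfl | h
      · simp [D, c]
      · have := congrArg revM (key 0 h)
        simp only [revM_mul, revM_D, revM_s] at this
        simpa using this.symm

lemma s_dvd_D {k : ℕ} (hk : k ≤ m) {i : ℕ} (hi : i < k) : s m i ∣ D m k := by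
  induction k generalizing i with
  | zero => omega
  | succ k ih =>
    rcases Nat.lt_succ_iff_lt_or_eq.1 hi with h | rfl
    · rw [D]
      exact (ih (by omega) h).mul_right _
    · -- the half twist ends in `s 0`, and moving that letter to the front turns it into `s i`
      obtain ⟨E, hE⟩ : ∃ E, D m (i + 1) = E * s m 0 := by
        have : ∀ k, ∃ e, c m (k + 1) = e * s m 0 := by
          intro k
          induction k with
          | zero => exact ⟨1, by simp [c]⟩
          | succ k ih =>
            obtain ⟨e, he⟩ := ih
            exact ⟨s m (k + 1) * e, by rw [c, he, mul_assoc]⟩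
        obtain ⟨e, he⟩ := this i
        exact ⟨D m i * e, by rw [D, he, mul_assoc]⟩
      have h := s_mul_D hk hi
      simp only [Nat.add_sub_cancel, Nat.sub_self] at h
      refine ⟨E, right_cancel (s m 0) _ _ ?_⟩
      rw [← h, mul_assoc, ← hE]

/-- The Garside element of the positive braid monoid. -/
def DD (m : ℕ) : BM m := D m m

lemma revM_DD : revM (DD m) = DD m := revM_D m

lemma gen_mul_DD (i : Fin m) : gen i * DD m = DD m * gen i.rev := by
  have := s_mul_D le_rfl i.2
  rw [s_val] at this
  rw [DD, this, ← s_val i.rev]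
  congr 2
  simp [Fin.val_rev]
  omega

lemma exists_mul_gen_eq_DD (i : Fin m) : ∃ e, e * gen i = DD m := by
  obtain ⟨e, he⟩ := s_dvd_D le_rfl i.2
  refine ⟨revM e, ?_⟩
  rw [← revM_DD, DD, he]
  simp [s_val]

lemma exists_mul_DD (x : BM m) : ∃ y, x * DD m = DD m * y := by
  induction x using gen_induction with
  | one => exact ⟨1, by simp⟩
  | mul i x ih =>
    obtain ⟨y, hy⟩ := ih
    exact ⟨gen i.rev * y, by rw [mul_assoc, hy, ← mul_assoc, gen_mul_DD, mul_assoc]⟩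

lemma exists_DD_mul (x : BM m) : ∃ y, DD m * x = y * DD m := by
  obtain ⟨y, hy⟩ := exists_mul_DD (revM x)
  exact ⟨revM y, by simpa [revM_DD] using congrArg revM hy⟩

lemma exists_mul_DD_pow (r : ℕ) (x : BM m) : ∃ y, x * DD m ^ r = DD m ^ r * y := by
  induction r with
  | zero => exact ⟨x, by simp⟩
  | succ r ih =>
    obtain ⟨y, hy⟩ := ih
    obtain ⟨z, hz⟩ := exists_mul_DD y
    exact ⟨z, by rw [pow_succ, ← mul_assoc, hy, mul_assoc, hz, mul_assoc]⟩

lemma exists_DD_pow_mul (r : ℕ) (x : BM m) : ∃ y, DD m ^ r * x = y * DD m ^ r := by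
  induction r with
  | zero => exact ⟨x, by simp⟩
  | succ r ih =>
    obtain ⟨y, hy⟩ := ih
    obtain ⟨z, hz⟩ := exists_DD_mul y
    exact ⟨z, by rw [pow_succ', mul_assoc, hy, ← mul_assoc, hz, mul_assoc]⟩

lemma exists_mul_eq_DD_pow (x : BM m) : ∃ b k, b * x = DD m ^ k := by
  induction x using gen_induction with
  | one => exact ⟨1, 0, by simp⟩
  | mul i x ih =>
    obtain ⟨b, k, h⟩ := ih
    obtain ⟨e, he⟩ := exists_mul_gen_eq_DD i
    obtain ⟨b', hb'⟩ := exists_DD_mul b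
    refine ⟨b' * e, k + 1, ?_⟩
    rw [mul_assoc, ← mul_assoc e, he, ← mul_assoc, ← hb', mul_assoc, h, pow_succ']

/-! ### Embedding the monoid into the braid group -/

lemma exists_ore (x y : BM m) : ∃ u v : BM m, u * x = v * y := by
  obtain ⟨b, k, h⟩ := exists_mul_eq_DD_pow y
  obtain ⟨z, hz⟩ := exists_DD_pow_mul k x
  exact ⟨DD m ^ k, z * b, by rw [hz, mul_assoc, h]⟩

noncomputable instance oreSet : OreLocalization.OreSet (⊤ : Submonoid (BM m)) where
  ore_right_cancel x y z h := ⟨1, by rw [right_cancel _ _ _ h]⟩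
  oreNum x y := (exists_ore x (y : BM m)).choose_spec.choose
  oreDenom x y := ⟨(exists_ore x (y : BM m)).choose, trivial⟩
  ore_eq x y := (exists_ore x (y : BM m)).choose_spec.choose_spec

/-- The group of fractions of the positive braid monoid. -/
abbrev Frac (m : ℕ) := OreLocalization (⊤ : Submonoid (BM m)) (BM m)

lemma numeratorHom_injective :
    Function.Injective (OreLocalization.numeratorHom : BM m →* Frac m) := by
  intro x y h
  rw [OreLocalization.numeratorHom_apply, OreLocalization.numeratorHom_apply,
    OreLocalization.oreDiv_eq_iff] at h
  obtain ⟨u, v, h1, h2⟩ := h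
  have h2' : (u : BM m) = v := by simpa using h2
  have h1' : (u : BM m) * y = v * x := h1
  rw [← h2'] at h1'
  exact (left_cancel _ _ _ h1').symm

/-- The image of a generator in the unit group of `Frac m`. -/
noncomputable def unitGen (i : Fin m) : (Frac m)ˣ :=
  OreLocalization.numeratorUnit (⟨gen i, trivial⟩ : (⊤ : Submonoid (BM m)))

lemma unitGen_val (i : Fin m) :
    ((unitGen i : (Frac m)ˣ) : Frac m) = OreLocalization.numeratorHom (gen i) := rfl

end BraidMonoid

open BraidMonoid

lemma sigma_far {n : ℕ} {i j : Fin (n - 1)} (h : (i : ℕ) + 1 < j) :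
    (σ i : B n) * σ j = σ j * σ i := by
  have : (PresentedGroup.mk (braidRels (n - 1))) (FreeGroup.of i * FreeGroup.of j *
      (FreeGroup.of i)⁻¹ * (FreeGroup.of j)⁻¹) = 1 :=
    PresentedGroup.one_of_mem (Or.inl ⟨i, j, h, rfl⟩)
  simp only [map_mul, map_inv] at this
  exact (eq_of_mul_inv_eq_one (by simpa [mul_assoc, σ, PresentedGroup.of] using this))

lemma sigma_adj {n : ℕ} {i j : Fin (n - 1)} (h : (i : ℕ) + 1 = j) :
    (σ i : B n) * (σ j * σ i) = σ j * (σ i * σ j) := by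
  have : (PresentedGroup.mk (braidRels (n - 1))) (FreeGroup.of i * FreeGroup.of j *
      FreeGroup.of i * (FreeGroup.of j)⁻¹ * (FreeGroup.of i)⁻¹ * (FreeGroup.of j)⁻¹) = 1 :=
    PresentedGroup.one_of_mem (Or.inr ⟨i, j, h, rfl⟩)
  simp only [map_mul, map_inv] at this
  exact (eq_of_mul_inv_eq_one (by simpa [mul_assoc, σ, PresentedGroup.of] using this))

/-- The canonical map from the positive braid monoid to the braid group. -/
def toB (n : ℕ) : BM (n - 1) →* B n :=
  PresentedMonoid.lift (fun i => σ i) (by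
    intro a b h
    cases h with
    | far i j h =>
      rcases h with h | h
      · simpa using sigma_far h
      · simpa using (sigma_far h).symm
    | adj i j h =>
      rcases h with h | h
      · simpa using sigma_adj h
      · simpa using (sigma_adj h).symm)

@[simp] lemma toB_gen {n : ℕ} (i : Fin (n - 1)) : toB n (gen i) = σ i := rfl

/-- The braid group maps to the units of the group of fractions. -/
noncomputable def ofB (n : ℕ) : B n →* (Frac (n - 1))ˣ :=
  PresentedGroup.toGroup (f := unitGen) (by
    rintro r (⟨i, j, h, rfl⟩ | ⟨i, j, h, rfl⟩)
    · simp only [map_mul, map_inv, FreeGroup.lift_apply_of]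
      rw [mul_inv_eq_one, mul_inv_eq_iff_eq_mul]
      ext
      simp only [Units.val_mul, unitGen_val, ← map_mul]
      rw [gen_far (Or.inl h)]
    · simp only [map_mul, map_inv, FreeGroup.lift_apply_of]
      rw [mul_inv_eq_one, mul_inv_eq_iff_eq_mul, mul_inv_eq_iff_eq_mul]
      ext
      simp only [Units.val_mul, unitGen_val, ← map_mul]
      rw [mul_assoc, gen_adj (Or.inl h), mul_assoc])

/-- The positive braid monoid embeds into the braid group. -/
lemma toB_injective (n : ℕ) : Function.Injective (toB n) := by
  have h : (Units.coeHom (Frac (n - 1))).comp ((ofB n).comp (toB n)) =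
      (OreLocalization.numeratorHom : BM (n - 1) →* Frac (n - 1)) := by
    refine PresentedMonoid.ext _ fun i => ?_
    change ((ofB n (σ i) : (Frac (n - 1))ˣ) : Frac (n - 1)) = _
    rw [ofB, σ, PresentedGroup.toGroup.of]
    rfl
  intro x y hxy
  apply numeratorHom_injective
  rw [← h]
  simp [hxy]

lemma mem_P_iff {n : ℕ} {x : B n} : x ∈ P n ↔ ∃ y, toB n y = x := by
  constructor
  · intro hx
    refine Submonoid.closure_induction ?_ ⟨1, map_one _⟩ ?_ hx
    · rintro _ ⟨i, rfl⟩
      exact ⟨gen i, rfl⟩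
    · rintro _ _ _ _ ⟨y, rfl⟩ ⟨z, rfl⟩
      exact ⟨y * z, map_mul _ _ _⟩
  · rintro ⟨y, rfl⟩
    induction y using gen_induction with
    | one => simp [one_mem]
    | mul i x ih =>
      rw [map_mul]
      exact mul_mem (Submonoid.subset_closure ⟨i, rfl⟩) ih

lemma toB_DD (n : ℕ) : toB n (DD (n - 1)) = Δ n := by
  have hs : ∀ j, toB n (s (n - 1) j) = σ' j := by
    intro j
    unfold s σ'
    split <;> simp
  have hc : ∀ k, toB n (c (n - 1) k) = (((List.range k).reverse).map (σ' (n := n))).prod := by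
    intro k
    induction k with
    | zero => simp [c]
    | succ k ih => rw [c, map_mul, ih, hs]; simp [List.range_succ]
  have hD : ∀ k, toB n (D (n - 1) k) = ((List.range k).map
      (fun k => (((List.range (k + 1)).reverse).map (σ' (n := n))).prod)).prod := by
    intro k
    induction k with
    | zero => simp [D]
    | succ k ih =>
      rw [D, map_mul, ih, hc, List.range_succ (n := k), List.map_append, List.prod_append,
        List.map_singleton, List.prod_singleton, List.range_succ]
  exact hD _

/-! ### Joins in the braid group -/

lemma Delta_pow_mem (n r : ℕ) : Δ n ^ r ∈ P n :=
  pow_mem (mem_P_iff.2 ⟨_, toB_DD n⟩) r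

lemma conj_mem {n : ℕ} (r : ℕ) {p : B n} (hp : p ∈ P n) : Δ n ^ r * p * (Δ n ^ r)⁻¹ ∈ P n := by
  obtain ⟨x, rfl⟩ := mem_P_iff.1 hp
  obtain ⟨y, hy⟩ := exists_DD_pow_mul r x
  refine mem_P_iff.2 ⟨y, ?_⟩
  rw [eq_mul_inv_iff_mul_eq, ← toB_DD, ← map_pow, ← map_mul, ← map_mul, hy]

lemma conj_inv_mem {n : ℕ} (r : ℕ) {p : B n} (hp : p ∈ P n) :
    (Δ n ^ r)⁻¹ * p * Δ n ^ r ∈ P n := by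
  obtain ⟨x, rfl⟩ := mem_P_iff.1 hp
  obtain ⟨y, hy⟩ := exists_mul_DD_pow r x
  refine mem_P_iff.2 ⟨y, ?_⟩
  rw [mul_assoc, eq_inv_mul_iff_mul_eq, ← toB_DD, ← map_pow, ← map_mul, ← map_mul, hy]

/-- A power of `Δ` may be moved from one side of a braid to the other without affecting
positivity. -/
lemma Delta_pow_mul_mem_iff {n : ℕ} (r : ℕ) (g : B n) :
    Δ n ^ r * g ∈ P n ↔ g * Δ n ^ r ∈ P n := by
  constructor
  · intro h
    simpa [mul_assoc] using conj_inv_mem r h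
  · intro h
    simpa [mul_assoc] using conj_mem r h

/-- For positive `x`, the elements `1` and `x * Δ ^ (-r)` have a join `a` for the order
`g ≤ h ↔ g⁻¹ * h ∈ P`. Up to the factor `Δ ^ r` it is the least common multiple of `x` and
`Δ ^ r`. -/
lemma exists_join {n : ℕ} (r : ℕ) {x : B n} (hx : x ∈ P n) :
    ∃ a ∈ P n, Δ n ^ r * x⁻¹ * a ∈ P n ∧
      ∀ h ∈ P n, Δ n ^ r * x⁻¹ * h ∈ P n → a⁻¹ * h ∈ P n := by
  obtain ⟨X, rfl⟩ := mem_P_iff.1 hx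
  have hΔ : toB n (DD (n - 1) ^ r) = Δ n ^ r := by rw [map_pow, toB_DD]
  obtain ⟨y, hy⟩ := exists_mul_DD_pow r X
  obtain ⟨l, hl⟩ := exists_lcm (a := X) (b := DD (n - 1) ^ r) ⟨_, rfl⟩ ⟨y, hy⟩
  obtain ⟨⟨u, hu⟩, ⟨v, hv⟩⟩ := (hl l).2 dvd_rfl
  refine ⟨toB n l * (Δ n ^ r)⁻¹, ?_, ?_, ?_⟩
  · rw [hv, map_mul, hΔ]
    exact conj_mem r (mem_P_iff.2 ⟨v, rfl⟩)
  · rw [hu, map_mul]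
    simpa [mul_assoc] using conj_mem r (mem_P_iff.2 ⟨u, rfl⟩)
  · intro h hh hh'
    obtain ⟨p, hp⟩ := mem_P_iff.1 (conj_inv_mem r hh)
    obtain ⟨q, hq⟩ := mem_P_iff.1 (conj_inv_mem r hh')
    have e₁ : h * Δ n ^ r = toB n (DD (n - 1) ^ r * p) := by
      rw [map_mul, hΔ, hp]
      group
    have e₂ : h * Δ n ^ r = toB n (X * q) := by
      rw [map_mul, hq]
      group
    have e : DD (n - 1) ^ r * p = X * q := toB_injective n (e₁.symm.trans e₂)
    obtain ⟨w, hw⟩ := (hl (X * q)).1 ⟨⟨q, rfl⟩, ⟨p, e.symm⟩⟩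
    have e₃ : h = toB n l * toB n w * (Δ n ^ r)⁻¹ := by
      rw [eq_mul_inv_iff_mul_eq, e₂, hw, map_mul]
    rw [e₃]
    simpa [mul_assoc] using conj_mem r (mem_P_iff.2 ⟨w, rfl⟩)

/-! ### The palindromic decomposition -/

lemma rev_one {n : ℕ} {rev : B n → B n}
    (hrev_mul : ∀ x y : B n, rev (x * y) = rev y * rev x) : rev 1 = 1 := by
  have := hrev_mul 1 1
  rw [mul_one] at this
  exact (mul_eq_left.1 this.symm)

lemma rev_inv {n : ℕ} {rev : B n → B n}
    (hrev_mul : ∀ x y : B n, rev (x * y) = rev y * rev x)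
    (x : B n) : rev x⁻¹ = (rev x)⁻¹ := by
  rw [eq_inv_iff_mul_eq_one, ← hrev_mul, mul_inv_cancel, rev_one hrev_mul]

lemma rev_toB {n : ℕ} {rev : B n → B n}
    (hrev_mul : ∀ x y : B n, rev (x * y) = rev y * rev x)
    (hrev_gen : ∀ i : Fin (n - 1), rev (σ i) = σ i)
    (x : BM (n - 1)) : rev (toB n x) = toB n (revM x) := by
  induction x using gen_induction with
  | one => simp [rev_one hrev_mul]
  | mul i x ih => simp [hrev_mul, hrev_gen, ih]

lemma rev_mem {n : ℕ} {rev : B n → B n}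
    (hrev_mul : ∀ x y : B n, rev (x * y) = rev y * rev x)
    (hrev_gen : ∀ i : Fin (n - 1), rev (σ i) = σ i)
    {x : B n} (hx : x ∈ P n) : rev x ∈ P n := by
  obtain ⟨X, rfl⟩ := mem_P_iff.1 hx
  exact mem_P_iff.2 ⟨_, (rev_toB hrev_mul hrev_gen X).symm⟩

lemma rev_Delta_pow {n : ℕ} {rev : B n → B n}
    (hrev_mul : ∀ x y : B n, rev (x * y) = rev y * rev x)
    (hrev_gen : ∀ i : Fin (n - 1), rev (σ i) = σ i)
    (r : ℕ) : rev (Δ n ^ r) = Δ n ^ r := by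
  induction r with
  | zero => simp [rev_one hrev_mul]
  | succ r ih =>
    rw [pow_succ, hrev_mul, ih, ← toB_DD, rev_toB hrev_mul hrev_gen, revM_DD, ← pow_succ',
      ← pow_succ]

lemma rev_rev {n : ℕ} {rev : B n → B n}
    (hrev_mul : ∀ x y : B n, rev (x * y) = rev y * rev x)
    (hrev_gen : ∀ i : Fin (n - 1), rev (σ i) = σ i)
    (x : B n) : rev (rev x) = x := by
  let f : B n →* B n :=
    { toFun := fun x => rev (rev x)
      map_one' := by simp [rev_one hrev_mul]
      map_mul' := by intro x y; simp [hrev_mul] }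
  have : f = MonoidHom.id _ := by
    refine PresentedGroup.ext fun i => ?_
    change rev (rev (σ i)) = σ i
    rw [hrev_gen, hrev_gen]
  exact DFunLike.congr_fun this x

lemma eps_eq {n : ℕ} {rev : B n → B n}
    (hrev_mul : ∀ x y : B n, rev (x * y) = rev y * rev x)
    (hrev_gen : ∀ i : Fin (n - 1), rev (σ i) = σ i)
    {ε : B n ≃* B n} (hε : ∀ i : Fin (n - 1), ε (σ i) = (σ i)⁻¹) (x : B n) :
    ε x = (rev x)⁻¹ := by
  let f : B n →* B n :=
    { toFun := fun x => (rev x)⁻¹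
      map_one' := by simp [rev_one hrev_mul]
      map_mul' := by intro x y; simp [hrev_mul] }
  have : ε.toMonoidHom = f := by
    refine PresentedGroup.ext fun i => ?_
    change ε (σ i) = (rev (σ i))⁻¹
    rw [hrev_gen, hε]
  exact DFunLike.congr_fun this x

/-- The decomposition when `x` divides `rev x * Δ ^ r`. With `a` the join of `1` and
`x * Δ ^ (-r)`, both `rev x` and `x * (rev a)⁻¹` are upper bounds of `1` and `x * Δ ^ (-r)`, the
second one because `a` divides `Δ ^ k` and hence `Δ ^ r`. So `a` is a left divisor of
`x * (rev a)⁻¹`; the factor named `a` in the conclusion is the reverse of this join. -/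
lemma decomposition_of_dvd {n : ℕ} {rev : B n → B n}
    (hrev_mul : ∀ x y : B n, rev (x * y) = rev y * rev x)
    (hrev_gen : ∀ i : Fin (n - 1), rev (σ i) = σ i)
    {x : B n} (hx : x ∈ P n) {r k : ℕ} (hrk : k ≤ r)
    (hsup : x⁻¹ * Δ n ^ (r + k) ∈ P n) (h : x⁻¹ * rev x * Δ n ^ r ∈ P n) :
    ∃ a b : B n, a ∈ P n ∧ b ∈ P n ∧ x = rev a * b * a ∧ b⁻¹ * Δ n ^ r ∈ P n := by
  obtain ⟨a, ha, ha', hmin⟩ := exists_join r hx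
  have haΔ : a⁻¹ * Δ n ^ r ∈ P n := by
    have h₁ : a⁻¹ * Δ n ^ k ∈ P n := by
      refine hmin _ (Delta_pow_mem n k) ?_
      rw [mul_assoc, Delta_pow_mul_mem_iff, mul_assoc, ← pow_add, add_comm k r]
      exact hsup
    have := mul_mem h₁ (Delta_pow_mem n (r - k))
    rwa [mul_assoc, ← pow_add, Nat.add_sub_cancel' hrk] at this
  have har : a⁻¹ * rev x ∈ P n := by
    refine hmin _ (rev_mem hrev_mul hrev_gen hx) ?_
    rw [mul_assoc, Delta_pow_mul_mem_iff]
    exact h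
  have hz : x * (rev a)⁻¹ ∈ P n := by
    have := rev_mem hrev_mul hrev_gen har
    rwa [hrev_mul, rev_rev hrev_mul hrev_gen, rev_inv hrev_mul] at this
  have hb : a⁻¹ * (x * (rev a)⁻¹) ∈ P n := by
    refine hmin _ hz ?_
    have := rev_mem hrev_mul hrev_gen haΔ
    rw [hrev_mul, rev_Delta_pow hrev_mul hrev_gen, rev_inv hrev_mul] at this
    simpa [mul_assoc] using this
  refine ⟨rev a, _, rev_mem hrev_mul hrev_gen ha, hb, ?_, ?_⟩
  · rw [rev_rev hrev_mul hrev_gen]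
    group
  · rw [← Delta_pow_mul_mem_iff]
    have := mul_mem (conj_mem r (rev_mem hrev_mul hrev_gen ha)) ha'
    simpa [mul_assoc] using this

/-- positive braids of supremum `r + k` whose ε-twisted square has
canonical length at most `2r + 1` decompose as `rev a * b * a` with `sup b ≤ r`. -/
theorem sup_and_palindromic (n : ℕ)
    (ε : B n ≃* B n) (hε : ∀ i : Fin (n - 1), ε (σ i) = (σ i)⁻¹)
    (rev : B n → B n)
    (hrev_mul : ∀ x y : B n, rev (x * y) = rev y * rev x)
    (hrev_gen : ∀ i : Fin (n - 1), rev (σ i) = σ i)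
    (x : B n) (hx : x ∈ P n) (r k : ℕ) (hk : 1 ≤ k) (hrk : k ≤ r)
    (hsup_le : x⁻¹ * (Δ n) ^ (r + k) ∈ P n)
    (hsup_lt : x⁻¹ * (Δ n) ^ (r + k - 1) ∉ P n)
    (hlen : lenLE (ε x * x) (2 * r + 1)) :
    ∃ a b : B n, a ∈ P n ∧ b ∈ P n ∧ x = rev a * b * a ∧
      b⁻¹ * (Δ n) ^ r ∈ P n := by
  obtain ⟨p, hp₁, hp₂⟩ := hlen
  rw [eps_eq hrev_mul hrev_gen hε] at hp₁ hp₂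
  rcases le_or_gt (-(r : ℤ)) p with hp | hp
  · -- the infimum of `(rev x)⁻¹ * x` is at least `-r`: decompose `rev x`, then reverse
    have h₁ : Δ n ^ r * ((rev x)⁻¹ * x) ∈ P n := by
      have := mul_mem (Delta_pow_mem n (r + p).toNat) hp₁
      rwa [← zpow_natCast, Int.toNat_of_nonneg (by omega), ← mul_assoc, ← zpow_add,
        add_neg_cancel_right, zpow_natCast] at this
    rw [Delta_pow_mul_mem_iff] at h₁
    have hsup : (rev x)⁻¹ * Δ n ^ (r + k) ∈ P n := by
      rw [← Delta_pow_mul_mem_iff]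
      have := rev_mem hrev_mul hrev_gen hsup_le
      rwa [hrev_mul, rev_Delta_pow hrev_mul hrev_gen, rev_inv hrev_mul] at this
    obtain ⟨a, b, ha, hb, hab, hbr⟩ := decomposition_of_dvd hrev_mul hrev_gen
      (rev_mem hrev_mul hrev_gen hx) hrk hsup (by rwa [rev_rev hrev_mul hrev_gen])
    refine ⟨a, rev b, ha, rev_mem hrev_mul hrev_gen hb, ?_, ?_⟩
    · have := congrArg rev hab
      rwa [rev_rev hrev_mul hrev_gen, hrev_mul, hrev_mul, rev_rev hrev_mul hrev_gen,
        ← mul_assoc] at this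
    · rw [← Delta_pow_mul_mem_iff]
      have := rev_mem hrev_mul hrev_gen hbr
      rwa [hrev_mul, rev_Delta_pow hrev_mul hrev_gen, rev_inv hrev_mul] at this
  · -- otherwise the supremum of `(rev x)⁻¹ * x` is at most `r`
    refine decomposition_of_dvd hrev_mul hrev_gen hx hrk hsup_le ?_
    have := mul_mem hp₂ (Delta_pow_mem n (-r - 1 - p).toNat)
    rw [← zpow_natCast, Int.toNat_of_nonneg (by omega), mul_assoc, ← zpow_add] at this
    have e : p + ((2 * r + 1 : ℕ) : ℤ) + (-r - 1 - p) = (r : ℤ) := by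
      push_cast
      ring
    rw [e, zpow_natCast, mul_inv_rev, inv_inv] at this
    exact this
end
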